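/- arXiv:1310.0701 — 4 statements merged into one kernel-verified Lean document; each statement's English description precedes it below -/
import Mathlib

section
/- Let (X,d) be a metric space and x₀ ∈ X a fixed base point. Define the Brownian kernel K(x,y) = (1/2)(d(x,x₀) + d(y,x₀) − d(x,y)). Then K is a positive definite kernel on X (i.e. for every n, all x₁,…,xₙ ∈ X and all ξ₁,…,ξₙ ∈ ℂ, the real part of ∑_{i,j=1}^n K(xᵢ,xⱼ) ξᵢ conj(ξⱼ) is ≥ 0) if and only if d is a restricted negative definite kernel on X (i.e. for every n, all x₁,…,xₙ ∈ X and all ξ₁,…,ξₙ ∈ ℂ with ∑_{i=1}^n ξᵢ = 0, the real part of ∑_{i,j=1}^n d(xᵢ,xⱼ) ξᵢ conj(ξⱼ) is ≤ 0). -/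
/-!
The value of the Brownian form at points `x₁, …, xₙ` with weights `ξ₁, …, ξₙ` is `-1/2` times the
value of the form of the original kernel after adding the base point `x₀` with the weight `-∑ ξᵢ`
that makes the total weight zero. So negativity on weights of sum zero gives positivity on all
weights; conversely, if `∑ ξᵢ = 0` already, the added point carries weight zero and is invisible.
-/

open scoped ComplexConjugate

section KernelForm

variable {R X : Type*} {n : ℕ}

/-- The sesquilinear form `∑ᵢⱼ k(xᵢ, xⱼ) ξᵢ conj(ξⱼ)` of a kernel `k` at a finite family of points
`x` (repetitions allowed), evaluated on the diagonal at the weights `ξ`. -/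
def kernelForm [CommSemiring R] [StarRing R] (k : X → X → R) (x : Fin n → X) (ξ : Fin n → R) : R :=
  ∑ i, ∑ j, k (x i) (x j) * ξ i * conj (ξ j)

theorem kernelForm_cons [CommSemiring R] [StarRing R] (k : X → X → R) (a : X) (c : R)
    (x : Fin n → X) (ξ : Fin n → R) :
    kernelForm k (Fin.cons a x : Fin (n + 1) → X) (Fin.cons c ξ : Fin (n + 1) → R) =
      k a a * c * conj c + c * ∑ j, k a (x j) * conj (ξ j) +
        (∑ i, k (x i) a * ξ i) * conj c + kernelForm k x ξ := by
  simp only [kernelForm, Fin.sum_univ_succ, Fin.cons_zero, Fin.cons_succ, Finset.sum_add_distrib,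
    Finset.mul_sum, Finset.sum_mul, mul_left_comm c, mul_assoc]
  ring

theorem kernelForm_cons_zero [CommSemiring R] [StarRing R] (k : X → X → R) (a : X)
    (x : Fin n → X) (ξ : Fin n → R) :
    kernelForm k (Fin.cons a x : Fin (n + 1) → X) (Fin.cons 0 ξ : Fin (n + 1) → R) =
      kernelForm k x ξ := by
  simp [kernelForm_cons]

/-- The Brownian kernel of an arbitrary kernel `k` with base point `x₀`. For a symmetric `k`
vanishing at `(x₀, x₀)`, such as a distance, it is `(k(x, x₀) + k(y, x₀) - k(x, y)) / 2`; in
general, subtracting `k(x₀, x₀)` makes it vanish whenever `x` or `y` is the base point. -/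
def brownianKernel [Field R] (k : X → X → R) (x₀ x y : X) : R :=
  (k x x₀ + k x₀ y - k x y - k x₀ x₀) / 2

theorem kernelForm_brownianKernel_eq_sums [Field R] [StarRing R] (k : X → X → R) (x₀ : X)
    (x : Fin n → X) (ξ : Fin n → R) :
    kernelForm (brownianKernel k x₀) x ξ =
      ((∑ i, k (x i) x₀ * ξ i) * conj (∑ j, ξ j) + (∑ i, ξ i) * ∑ j, k x₀ (x j) * conj (ξ j) -
        kernelForm k x ξ - k x₀ x₀ * ((∑ i, ξ i) * conj (∑ j, ξ j))) / 2 := by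
  simp only [kernelForm, brownianKernel, map_sum, Finset.sum_mul_sum]
  simp only [Finset.mul_sum, ← Finset.sum_add_distrib, ← Finset.sum_sub_distrib, Finset.sum_div]
  refine Finset.sum_congr rfl fun i _ ↦ Finset.sum_congr rfl fun j _ ↦ ?_
  ring

theorem kernelForm_brownianKernel [Field R] [StarRing R] (k : X → X → R) (x₀ : X)
    (x : Fin n → X) (ξ : Fin n → R) :
    kernelForm (brownianKernel k x₀) x ξ =
      -kernelForm k (Fin.cons x₀ x : Fin (n + 1) → X)
        (Fin.cons (-∑ i, ξ i) ξ : Fin (n + 1) → R) / 2 := by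
  rw [kernelForm_brownianKernel_eq_sums, kernelForm_cons, map_neg]
  ring

end KernelForm

section Definiteness

variable {𝕜 X : Type*} [RCLike 𝕜]

/-- Positive definite kernels, in the sense that only the real part of the form is required to be
nonnegative; no symmetry of `K` is imposed. -/
def IsPosDefKernel (K : X → X → 𝕜) : Prop :=
  ∀ (n : ℕ) (x : Fin n → X) (ξ : Fin n → 𝕜), 0 ≤ RCLike.re (kernelForm K x ξ)

/-- Restricted negative definite kernels: the real part of the form is nonpositive on weights of
total sum zero. As for `IsPosDefKernel`, no symmetry of `k` is imposed. -/
def IsRestrictedNegDefKernel (k : X → X → 𝕜) : Prop :=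
  ∀ (n : ℕ) (x : Fin n → X) (ξ : Fin n → 𝕜), ∑ i, ξ i = 0 → RCLike.re (kernelForm k x ξ) ≤ 0

theorem re_kernelForm_brownianKernel_nonneg_iff (k : X → X → 𝕜) (x₀ : X) {n : ℕ}
    (x : Fin n → X) (ξ : Fin n → 𝕜) :
    0 ≤ RCLike.re (kernelForm (brownianKernel k x₀) x ξ) ↔
      RCLike.re (kernelForm k (Fin.cons x₀ x : Fin (n + 1) → X)
        (Fin.cons (-∑ i, ξ i) ξ : Fin (n + 1) → 𝕜)) ≤ 0 := by
  rw [kernelForm_brownianKernel, ← RCLike.ofReal_ofNat (K := 𝕜) 2, RCLike.div_re_ofReal, map_neg]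
  constructor <;> intro h <;> linarith

theorem brownian_kernel_posdef_iff_dist_restricted_negdef_general (k : X → X → 𝕜) (x₀ : X) :
    IsPosDefKernel (brownianKernel k x₀) ↔ IsRestrictedNegDefKernel k := by
  constructor
  · intro hK n x ξ hξ
    have h := (re_kernelForm_brownianKernel_nonneg_iff k x₀ x ξ).1 (hK n x ξ)
    rwa [hξ, neg_zero, kernelForm_cons_zero] at h
  · intro hk n x ξ
    have total_weight : ∑ i, (Fin.cons (-∑ i, ξ i) ξ : Fin (n + 1) → 𝕜) i = 0 := by
      rw [Fin.sum_cons, neg_add_cancel]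
    exact (re_kernelForm_brownianKernel_nonneg_iff k x₀ x ξ).2 (hk _ _ _ total_weight)

end Definiteness

theorem brownianKernel_ofReal_dist {X : Type*} [PseudoMetricSpace X] (x₀ x y : X) :
    brownianKernel (fun x y ↦ (dist x y : ℂ)) x₀ x y =
      ((dist x x₀ + dist y x₀ - dist x y) / 2 : ℝ) := by
  simp [brownianKernel, dist_comm x₀ y]

open Finset in
/-- The Brownian kernel `K(x,y) = (d(x,x₀)+d(y,x₀)-d(x,y))/2` on a metric space `X`
is positive definite iff the distance `d` is a restricted negative definite kernel. -/
theorem brownian_kernel_posdef_iff_dist_restricted_negdef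
    {X : Type*} [MetricSpace X] (x₀ : X) :
    (∀ (n : ℕ) (x : Fin n → X) (ξ : Fin n → ℂ),
        0 ≤ (∑ i, ∑ j,
          (((dist (x i) x₀ + dist (x j) x₀ - dist (x i) (x j)) / 2 : ℝ) : ℂ)
            * ξ i * (starRingEnd ℂ) (ξ j)).re) ↔
      (∀ (n : ℕ) (x : Fin n → X) (ξ : Fin n → ℂ), (∑ i, ξ i) = 0 →
        (∑ i, ∑ j,
          ((dist (x i) (x j) : ℝ) : ℂ) * ξ i * (starRingEnd ℂ) (ξ j)).re ≤ 0) := by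
  simp only [← brownianKernel_ofReal_dist]
  exact brownian_kernel_posdef_iff_dist_restricted_negdef_general (fun x y ↦ (dist x y : ℂ)) x₀
end

section
/- For every integer ℓ ≥ 1, (1/π) ∫_0^π t (1 + 2 ∑_{m=1}^{ℓ} cos(m t)) (1 − cos t) dt = (2/π) ( 1 + ∑_{m=1}^{ℓ} ((−1)^m − 1)/m² + ∑_{m=2}^{ℓ} ((m² + 1)/(m² − 1)²) ((−1)^m + 1) ). -/
/-!
The character times the angle density telescopes,
`(1 + 2 ∑_{m=1}^ℓ cos (m t)) (1 - cos t) = cos (ℓ t) - cos ((ℓ + 1) t)`,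
so the integral is a difference of two consecutive moments
`∫₀^π t cos (n t) dt = ((-1)^n - 1) / n²`. The sums on the right-hand side telescope to the same
difference, because `2 (m² + 1) / (m² - 1)² = 1 / (m - 1)² + 1 / (m + 1)²`.
-/

section Trigonometric

open Real

lemma one_add_two_mul_sum_cos_mul_one_sub_cos (ℓ : ℕ) (t : ℝ) :
    (1 + 2 * ∑ m ∈ Finset.Icc 1 ℓ, cos (m * t)) * (1 - cos t) =
      cos (ℓ * t) - cos ((ℓ + 1 : ℕ) * t) := by
  induction ℓ with
  | zero => simp
  | succ n ih =>
    have product_to_sum : 2 * cos ((n + 1 : ℕ) * t) * cos t =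
        cos (n * t) + cos ((n + 1 + 1 : ℕ) * t) := by
      rw [two_mul_cos_mul_cos]
      push_cast
      ring_nf
    rw [Finset.sum_Icc_succ_top (by omega)]
    linear_combination ih - product_to_sum

lemma integral_mul_cos_mul {c : ℝ} (hc : c ≠ 0) (a b : ℝ) :
    ∫ t in a..b, t * cos (c * t) =
      (b * sin (c * b) / c + cos (c * b) / c ^ 2) -
        (a * sin (c * a) / c + cos (c * a) / c ^ 2) := by
  refine intervalIntegral.integral_eq_sub_of_hasDerivAt
    (f := fun t => t * sin (c * t) / c + cos (c * t) / c ^ 2) (fun t _ => ?_)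
    (Continuous.intervalIntegrable (by fun_prop) a b)
  have hct : HasDerivAt (fun t => c * t) c t := hasDerivAt_const_mul c
  refine ((((hasDerivAt_id' t).mul hct.sin).div_const c).add
    (hct.cos.div_const (c ^ 2))).congr_deriv ?_
  field_simp
  ring

lemma integral_zero_pi_mul_cos_nat_mul {n : ℕ} (hn : n ≠ 0) :
    ∫ t in (0 : ℝ)..π, t * cos (n * t) = ((-1) ^ n - 1) / (n : ℝ) ^ 2 := by
  rw [integral_mul_cos_mul (Nat.cast_ne_zero.mpr hn)]
  simp only [sin_nat_mul_pi, cos_nat_mul_pi, mul_zero, zero_mul, zero_div, zero_add, cos_zero]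
  ring

end Trigonometric

section RationalSum

variable {K : Type*} [Field K]

lemma two_mul_sq_add_one_div_sq_sub_one_sq {x : K} (hsub : x - 1 ≠ 0) (hadd : x + 1 ≠ 0) :
    2 * ((x ^ 2 + 1) / (x ^ 2 - 1) ^ 2) = 1 / (x - 1) ^ 2 + 1 / (x + 1) ^ 2 := by
  rw [show x ^ 2 - 1 = (x - 1) * (x + 1) by ring]
  field_simp
  ring

lemma two_mul_one_add_sum_neg_one_pow_div_add_sum [CharZero K] {ℓ : ℕ} (hℓ : 1 ≤ ℓ) :
    2 * (1 + (∑ m ∈ Finset.Icc 1 ℓ, ((-1 : K) ^ m - 1) / (m : K) ^ 2)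
        + ∑ m ∈ Finset.Icc 2 ℓ,
            (((m : K) ^ 2 + 1) / ((m : K) ^ 2 - 1) ^ 2) * ((-1 : K) ^ m + 1)) =
      ((-1) ^ ℓ - 1) / (ℓ : K) ^ 2 - ((-1) ^ (ℓ + 1) - 1) / ((ℓ + 1 : ℕ) : K) ^ 2 := by
  induction ℓ, hℓ using Nat.le_induction with
  | base => norm_num
  | succ n hn ih =>
    have partial_fractions :
        2 * ((((n + 1 : ℕ) : K) ^ 2 + 1) / (((n + 1 : ℕ) : K) ^ 2 - 1) ^ 2) =
          1 / (n : K) ^ 2 + 1 / ((n + 1 + 1 : ℕ) : K) ^ 2 := by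
      have hsub : ((n + 1 : ℕ) : K) - 1 = n := by push_cast; ring
      have hadd : ((n + 1 : ℕ) : K) + 1 = (n + 1 + 1 : ℕ) := by push_cast; ring
      rw [two_mul_sq_add_one_div_sq_sub_one_sq, hsub, hadd]
      · rw [hsub]
        exact Nat.cast_ne_zero.mpr (by omega)
      · rw [hadd]
        exact Nat.cast_ne_zero.mpr (by omega)
    rw [Finset.sum_Icc_succ_top (by omega), Finset.sum_Icc_succ_top (by omega)]
    linear_combination ih + ((-1) ^ (n + 1) + 1) * partial_fractions

end RationalSum

open Real Finset in
/-- The Peter–Weyl coefficient `α_ℓ` of the rotation-angle distance on `SO(3)`: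
`(1/π) ∫₀^π t (1 + 2 ∑_{m=1}^ℓ cos(mt)) (1 - cos t) dt` equals
`(2/π)(1 + ∑_{m=1}^ℓ ((-1)^m - 1)/m² + ∑_{m=2}^ℓ ((m²+1)/(m²-1)²)((-1)^m + 1))`. -/
theorem SO3_peter_weyl_coefficient (ℓ : ℕ) (hℓ : 1 ≤ ℓ) :
    (1 / π) * ∫ t in (0 : ℝ)..π,
        t * (1 + 2 * ∑ m ∈ Finset.Icc 1 ℓ, cos (m * t)) * (1 - cos t) =
      (2 / π) * (1 + (∑ m ∈ Finset.Icc 1 ℓ, ((-1 : ℝ) ^ m - 1) / (m : ℝ) ^ 2)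
        + ∑ m ∈ Finset.Icc 2 ℓ,
            (((m : ℝ) ^ 2 + 1) / ((m : ℝ) ^ 2 - 1) ^ 2) * ((-1 : ℝ) ^ m + 1)) := by
  have integral_eq : ∫ t in (0 : ℝ)..π,
        t * (1 + 2 * ∑ m ∈ Finset.Icc 1 ℓ, cos (m * t)) * (1 - cos t) =
      ((-1) ^ ℓ - 1) / (ℓ : ℝ) ^ 2 - ((-1) ^ (ℓ + 1) - 1) / ((ℓ + 1 : ℕ) : ℝ) ^ 2 := by
    simp_rw [mul_assoc, one_add_two_mul_sum_cos_mul_one_sub_cos, mul_sub]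
    rw [intervalIntegral.integral_sub (Continuous.intervalIntegrable (by fun_prop) _ _)
        (Continuous.intervalIntegrable (by fun_prop) _ _),
      integral_zero_pi_mul_cos_nat_mul (by omega), integral_zero_pi_mul_cos_nat_mul (by omega)]
  rw [integral_eq, ← two_mul_one_add_sum_neg_one_pow_div_add_sum hℓ]
  ring
end

section
/- For every even integer ℓ ≥ 2, 1 + ∑_{m=1}^{ℓ} ((−1)^m − 1)/m² + ∑_{m=2}^{ℓ} ((m² + 1)/(m² − 1)²) ((−1)^m + 1) > 0. Consequently, for every even ℓ ≥ 2 the Peter–Weyl coefficient α_ℓ = (2/π)(1 + ∑_{m=1}^{ℓ} ((−1)^m − 1)/m² + ∑_{m=2}^{ℓ} ((m²+1)/(m²−1)²)((−1)^m + 1)) of the rotation-angle distance function on SO(3) is strictly positive. -/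
/-!
Only odd `m` contribute to the first sum and only even `m` to the second, and the partial fraction
decomposition `2 (m² + 1) / (m² - 1)² = 1 / (m - 1)² + 1 / (m + 1)²` turns the even terms into
inverse squares of odd numbers. The total then telescopes, and for even `ℓ` it equals
`1 / (ℓ + 1)²`.
-/

open Finset

section ParitySums

variable {R : Type*} [Ring R] (f : ℕ → R) (n : ℕ)

theorem sum_Icc_one_neg_one_pow_sub_one_mul :
    ∑ m ∈ Icc 1 (2 * n), ((-1) ^ m - 1) * f m = ∑ k ∈ range n, -2 * f (2 * k + 1) := by
  induction n with
  | zero => simp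
  | succ n ih =>
    have weight_odd : (-1 : R) ^ (2 * n + 1) - 1 = -2 := by
      rw [(odd_two_mul_add_one n).neg_one_pow]; norm_num
    have weight_even : (-1 : R) ^ (2 * n + 1 + 1) - 1 = 0 := by
      rw [(odd_two_mul_add_one n).add_one.neg_one_pow, sub_self]
    rw [show 2 * (n + 1) = 2 * n + 1 + 1 from rfl, sum_Icc_succ_top (by omega),
      sum_Icc_succ_top (by omega), ih, sum_range_succ, weight_odd, weight_even, zero_mul, add_zero]

theorem sum_Icc_two_mul_neg_one_pow_add_one :
    ∑ m ∈ Icc 2 (2 * n), f m * ((-1) ^ m + 1) = ∑ k ∈ range n, f (2 * k + 2) * 2 := by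
  have weight_odd (k : ℕ) : (-1 : R) ^ (2 * k + 1) + 1 = 0 := by
    rw [(odd_two_mul_add_one k).neg_one_pow, neg_add_cancel]
  have weight_even (k : ℕ) : (-1 : R) ^ (2 * k + 1 + 1) + 1 = 2 := by
    rw [(odd_two_mul_add_one k).add_one.neg_one_pow, one_add_one_eq_two]
  induction n with
  | zero => simp
  | succ n ih =>
    rw [show 2 * (n + 1) = 2 * n + 1 + 1 from rfl, sum_Icc_succ_top (by omega), sum_range_succ,
      weight_even, ← ih]
    rcases n.eq_zero_or_pos with rfl | n_pos
    · simp
    · rw [sum_Icc_succ_top (by omega), weight_odd, mul_zero, add_zero]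

end ParitySums

section Field

variable {K : Type*} [Field K]

theorem sq_add_one_div_sq_sub_one_sq_mul_two {x : K} (hsub : x - 1 ≠ 0) (hadd : x + 1 ≠ 0) :
    (x ^ 2 + 1) / (x ^ 2 - 1) ^ 2 * 2 = 1 / (x - 1) ^ 2 + 1 / (x + 1) ^ 2 := by
  rw [show x ^ 2 - 1 = (x - 1) * (x + 1) by ring]
  field_simp
  ring

theorem sum_Icc_one_neg_one_pow_sub_one_div_sq (n : ℕ) :
    ∑ m ∈ Icc 1 (2 * n), ((-1 : K) ^ m - 1) / (m : K) ^ 2 =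
      ∑ k ∈ range n, -2 / (2 * (k : K) + 1) ^ 2 := by
  simpa [div_eq_mul_inv] using
    sum_Icc_one_neg_one_pow_sub_one_mul (fun m : ℕ ↦ ((m : K) ^ 2)⁻¹) n

variable [CharZero K]

theorem sum_Icc_two_sq_add_one_div_mul_neg_one_pow_add_one (n : ℕ) :
    ∑ m ∈ Icc 2 (2 * n), ((m : K) ^ 2 + 1) / ((m : K) ^ 2 - 1) ^ 2 * ((-1) ^ m + 1) =
      ∑ k ∈ range n, (1 / (2 * (k : K) + 1) ^ 2 + 1 / (2 * (k : K) + 3) ^ 2) := by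
  rw [sum_Icc_two_mul_neg_one_pow_add_one fun m : ℕ ↦ ((m : K) ^ 2 + 1) / ((m : K) ^ 2 - 1) ^ 2]
  refine sum_congr rfl fun k _ ↦ ?_
  have pred_eq : ((2 * k + 2 : ℕ) : K) - 1 = 2 * k + 1 := by push_cast; ring
  have succ_eq : ((2 * k + 2 : ℕ) : K) + 1 = 2 * k + 3 := by push_cast; ring
  rw [sq_add_one_div_sq_sub_one_sq_mul_two, pred_eq, succ_eq]
  · rw [pred_eq]
    exact_mod_cast (2 * k).succ_ne_zero
  · exact Nat.cast_add_one_ne_zero _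

theorem one_add_sum_Icc_add_sum_Icc_eq_one_div_sq {ℓ : ℕ} (heven : Even ℓ) :
    1 + (∑ m ∈ Icc 1 ℓ, ((-1 : K) ^ m - 1) / (m : K) ^ 2)
        + (∑ m ∈ Icc 2 ℓ, ((m : K) ^ 2 + 1) / ((m : K) ^ 2 - 1) ^ 2 * ((-1) ^ m + 1)) =
      1 / ((ℓ : K) + 1) ^ 2 := by
  obtain ⟨n, rfl⟩ := heven.exists_two_nsmul
  rw [smul_eq_mul, sum_Icc_one_neg_one_pow_sub_one_div_sq,
    sum_Icc_two_sq_add_one_div_mul_neg_one_pow_add_one, add_assoc, ← sum_add_distrib]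
  let u (k : ℕ) : K := 1 / (2 * (k : K) + 1) ^ 2
  have term_eq (k : ℕ) :
      -2 / (2 * (k : K) + 1) ^ 2 + (1 / (2 * (k : K) + 1) ^ 2 + 1 / (2 * (k : K) + 3) ^ 2) =
        u (k + 1) - u k := by
    have succ_eq : 2 * ((k + 1 : ℕ) : K) + 1 = 2 * k + 3 := by push_cast; ring
    simp only [u, succ_eq]
    ring
  simp only [term_eq, sum_range_sub]
  simp [u]

end Field

open Real Finset in
/-- For every even `ℓ ≥ 2`, the quantity
`1 + ∑_{m=1}^ℓ ((-1)^m - 1)/m² + ∑_{m=2}^ℓ ((m²+1)/(m²-1)²)((-1)^m + 1)` is positive;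
consequently the Peter–Weyl coefficient `α_ℓ = (2/π) ·` (that quantity) of the
rotation-angle distance on `SO(3)` is positive. -/
theorem SO3_alpha_even_pos (ℓ : ℕ) (hℓ : 2 ≤ ℓ) (heven : Even ℓ) :
    0 < 1 + (∑ m ∈ Finset.Icc 1 ℓ, ((-1 : ℝ) ^ m - 1) / (m : ℝ) ^ 2)
        + (∑ m ∈ Finset.Icc 2 ℓ,
            (((m : ℝ) ^ 2 + 1) / ((m : ℝ) ^ 2 - 1) ^ 2) * ((-1 : ℝ) ^ m + 1)) ∧
      0 < (2 / π) * (1 + (∑ m ∈ Finset.Icc 1 ℓ, ((-1 : ℝ) ^ m - 1) / (m : ℝ) ^ 2)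
        + ∑ m ∈ Finset.Icc 2 ℓ,
            (((m : ℝ) ^ 2 + 1) / ((m : ℝ) ^ 2 - 1) ^ 2) * ((-1 : ℝ) ^ m + 1)) := by
  have bracket_pos :
      0 < 1 + (∑ m ∈ Finset.Icc 1 ℓ, ((-1 : ℝ) ^ m - 1) / (m : ℝ) ^ 2)
        + (∑ m ∈ Finset.Icc 2 ℓ,
            (((m : ℝ) ^ 2 + 1) / ((m : ℝ) ^ 2 - 1) ^ 2) * ((-1 : ℝ) ^ m + 1)) := by
    rw [one_add_sum_Icc_add_sum_Icc_eq_one_div_sq heven]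
    positivity
  exact ⟨bracket_pos, mul_pos (by positivity) bracket_pos⟩
end

section
/- The geodesic distance on the unit sphere S³ of Euclidean ℝ⁴, d(x,y) = arccos(⟨x,y⟩), is a restricted negative definite kernel: for every n, all x₁,…,xₙ ∈ S³ and all ξ₁,…,ξₙ ∈ ℂ with ∑ᵢ ξᵢ = 0, the real part of ∑_{i,j} arccos(⟨xᵢ,xⱼ⟩) ξᵢ conj(ξⱼ) is ≤ 0. -/
/-!
Since `arccos = π / 2 - arcsin` and the constant `π / 2` does not contribute when `∑ ξᵢ = 0`, it
suffices that `arcsin ⟪x, y⟫` is a positive semidefinite kernel on the unit ball. Functions with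
nonnegative Taylor coefficients, such as `u ↦ (1 - u) ^ (-1/2)`, preserve positive semidefiniteness
when applied entrywise, by the Schur product theorem. Hence for a positive semidefinite `A` with
entries in `[-1, 1]` and `0 < s < 1` the entrywise derivative `A i j / √(1 - (s * A i j) ^ 2)` of
`s ↦ arcsin (s * A i j)` is positive semidefinite, so the quadratic form of `arcsin (s * A i j)`
increases on `[0, 1]` from its value `0` at `s = 0`. Comparing with `s = 1` in this way avoids the
convergence of the arcsine series at `±1`.
-/

open Matrix Set
open scoped ComplexOrder ComplexConjugate

section EntrywiseFunctions

variable {ι 𝕜 : Type*} [RCLike 𝕜]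

theorem posSemidef_of_hasSum {α : Type*} {F : α → Matrix ι ι 𝕜} {A : Matrix ι ι 𝕜}
    (hF : ∀ a, (F a).PosSemidef) (hsum : HasSum F A) : A.PosSemidef := by
  have entry (i j : ι) : HasSum (fun a ↦ F a i j) (A i j) := Pi.hasSum.1 (Pi.hasSum.1 hsum i) j
  refine ⟨hsum.matrix_conjTranspose.unique ?_, fun v ↦ ?_⟩
  · simpa only [(hF _).isHermitian.eq] using hsum
  · exact HasSum.nonneg (fun a ↦ (hF a).2 v) <| hasSum_sum fun i _ ↦ hasSum_sum fun j _ ↦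
      ((entry i j).mul_left _).mul_right _

theorem posSemidef_map_pow {A : Matrix ι ι 𝕜} (hA : A.PosSemidef) (k : ℕ) :
    (A.map (· ^ k)).PosSemidef := by
  induction k with
  | zero =>
    convert (PosSemidef.one (n := Unit) (R := 𝕜)).submatrix fun _ : ι ↦ () using 1
    ext i j
    simp
  | succ k ih =>
    convert ih.hadamard hA using 1
    ext i j
    simp [pow_succ]

theorem posSemidef_map_of_hasSum_mul_pow {A : Matrix ι ι 𝕜} (hA : A.PosSemidef)
    {c : ℕ → 𝕜} (hc : ∀ k, 0 ≤ c k) {f : 𝕜 → 𝕜}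
    (hf : ∀ i j, HasSum (fun k ↦ c k * A i j ^ k) (f (A i j))) : (A.map f).PosSemidef :=
  posSemidef_of_hasSum (fun k ↦ (posSemidef_map_pow hA k).smul (hc k)) <|
    Pi.hasSum.2 fun i ↦ Pi.hasSum.2 (hf i)

theorem choose_add_natCast_sub_one_pos {a : ℝ} (ha : 0 < a) (k : ℕ) :
    0 < Ring.choose (a + k - 1) k := by
  have factorial_mul_choose :
      k.factorial * Ring.choose (a + k - 1) k = (ascPochhammer ℝ k).eval a := by
    rw [← nsmul_eq_mul, Ring.choose, Ring.factorial_nsmul_multichoose_eq_ascPochhammer,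
      Polynomial.ascPochhammer_smeval_eq_eval]
    ring_nf
  refine pos_of_mul_pos_right ?_ k.factorial.cast_nonneg
  exact factorial_mul_choose ▸ ascPochhammer_pos k a ha

theorem hasSum_one_div_one_sub_rpow (a : ℝ) {x : ℝ} (hx : |x| < 1) :
    HasSum (fun k : ℕ ↦ Ring.choose (a + k - 1) k * x ^ k) (1 / (1 - x) ^ a) := by
  have hmem : x ∈ Metric.eball (0 : ℝ) 1 := by
    rw [← ENNReal.ofReal_one, Metric.eball_ofReal]
    simpa using hx
  simpa [FormalMultilinearSeries.ofScalars_apply_eq, mul_comm] using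
    (Real.one_div_one_sub_rpow_hasFPowerSeriesOnBall_zero a).hasSum_sub hmem

theorem posSemidef_map_one_div_one_sub_rpow {A : Matrix ι ι ℝ} (hA : A.PosSemidef)
    (hlt : ∀ i j, |A i j| < 1) {a : ℝ} (ha : 0 < a) :
    (A.map fun x ↦ 1 / (1 - x) ^ a).PosSemidef :=
  posSemidef_map_of_hasSum_mul_pow hA (fun k ↦ (choose_add_natCast_sub_one_pos ha k).le)
    fun i j ↦ hasSum_one_div_one_sub_rpow a (hlt i j)

theorem posSemidef_map_one_div_sqrt_one_sub_sq {A : Matrix ι ι ℝ} (hA : A.PosSemidef)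
    (hlt : ∀ i j, |A i j| < 1) : (A.map fun x ↦ 1 / √(1 - x ^ 2)).PosSemidef := by
  have sq_lt (i j : ι) : |A.map (· ^ 2) i j| < 1 := by
    simpa using hlt i j
  simpa [Function.comp_def, Real.sqrt_eq_rpow] using
    posSemidef_map_one_div_one_sub_rpow (posSemidef_map_pow hA 2) sq_lt one_half_pos

theorem posSemidef_map_of_hasDerivAt {A : Matrix ι ι ℝ} (hA : A.PosSemidef) {R : ℝ} (hR : 0 < R)
    (hAR : ∀ i j, |A i j| ≤ R) {f f' : ℝ → ℝ} (hf : ContinuousOn f (Icc (-R) R)) (hf₀ : 0 ≤ f 0)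
    (hf' : ∀ x ∈ Ioo (-R) R, HasDerivAt f (f' x) x)
    (hpos : ∀ s ∈ Ioo (0 : ℝ) 1, ((s • A).map f').PosSemidef) : (A.map f).PosSemidef := by
  refine ⟨hA.isHermitian.map f fun _ ↦ rfl, fun v ↦ ?_⟩
  let Q (s : ℝ) : ℝ := v.sum fun i vi ↦ v.sum fun j vj ↦ star vi * f (s * A i j) * vj
  let Q' (s : ℝ) : ℝ :=
    v.sum fun i vi ↦ v.sum fun j vj ↦ star vi * (A ⊙ (s • A).map f') i j * vj
  have scaled_abs_le {s : ℝ} (hs : 0 ≤ s) (i j : ι) : |s * A i j| ≤ s * R := by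
    rw [abs_mul, abs_of_nonneg hs]
    exact mul_le_mul_of_nonneg_left (hAR i j) hs
  have Q_cont : ContinuousOn Q (Icc 0 1) :=
    continuousOn_finsetSum _ fun i _ ↦ continuousOn_finsetSum _ fun j _ ↦ by
      refine (continuousOn_const.mul (hf.comp (by fun_prop) fun s hs ↦ ?_)).mul continuousOn_const
      exact abs_le.1 ((scaled_abs_le hs.1 i j).trans (mul_le_of_le_one_left hR.le hs.2))
  have Q_deriv {s : ℝ} (hs : s ∈ Ioo (0 : ℝ) 1) : HasDerivAt Q (Q' s) s :=
    .fun_sum fun i _ ↦ .fun_sum fun j _ ↦ by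
      have hmem : s * A i j ∈ Ioo (-R) R :=
        abs_lt.1 ((scaled_abs_le hs.1.le i j).trans_lt (mul_lt_of_lt_one_left hR hs.2))
      simpa [mul_comm (A i j)] using
        (((hf' _ hmem).comp s (hasDerivAt_mul_const (A i j))).const_mul (v i)).mul_const (v j)
  have Q_zero : 0 ≤ Q 0 := by
    simpa [Q] using ((posSemidef_map_pow hA 0).smul hf₀).2 v
  have Q_mono : MonotoneOn Q (Icc 0 1) := by
    refine monotoneOn_of_hasDerivWithinAt_nonneg (f' := Q') (convex_Icc 0 1) Q_cont ?_ ?_ <;>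
      rw [interior_Icc]
    · exact fun s hs ↦ (Q_deriv hs).hasDerivWithinAt
    · exact fun s hs ↦ (hA.hadamard (hpos s hs)).2 v
  calc 0 ≤ Q 0 := Q_zero
    _ ≤ Q 1 := Q_mono (by simp) (by simp) zero_le_one
    _ = _ := by simp [Q]

theorem posSemidef_map_arcsin {A : Matrix ι ι ℝ} (hA : A.PosSemidef)
    (hle : ∀ i j, |A i j| ≤ 1) : (A.map Real.arcsin).PosSemidef := by
  refine posSemidef_map_of_hasDerivAt hA one_pos hle Real.continuous_arcsin.continuousOn
    Real.arcsin_zero.ge (fun x hx ↦ Real.hasDerivAt_arcsin hx.1.ne' hx.2.ne) fun s hs ↦ ?_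
  refine posSemidef_map_one_div_sqrt_one_sub_sq (hA.smul hs.1.le) fun i j ↦ ?_
  calc |s * A i j| = s * |A i j| := by rw [abs_mul, abs_of_pos hs.1]
    _ ≤ s := mul_le_of_le_one_right hs.1.le (hle i j)
    _ < 1 := hs.2

end EntrywiseFunctions

-- `Matrix.posSemidef_gram` requires a finite index type.
theorem posSemidef_of_inner {ι 𝕜 E : Type*} [RCLike 𝕜] [SeminormedAddCommGroup E]
    [InnerProductSpace 𝕜 E] (v : ι → E) :
    (Matrix.of fun i j ↦ inner 𝕜 (v i) (v j)).PosSemidef := by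
  refine ⟨isHermitian_gram 𝕜 v, fun c ↦ ?_⟩
  calc (0 : 𝕜) ≤ inner 𝕜 (c.sum fun i ci ↦ ci • v i) (c.sum fun j cj ↦ cj • v j) := by
        simp [inner_self_eq_norm_sq_to_K]
    _ = c.sum fun i ci ↦ c.sum fun j cj ↦ star ci * inner 𝕜 (v i) (v j) * cj := by
        rw [Finsupp.sum_inner]
        simp only [Finsupp.inner_sum, inner_smul_left, inner_smul_right, RCLike.star_def]
        exact Finsupp.sum_congr fun i _ ↦ Finsupp.sum_congr fun j _ ↦ by ring

section RestrictedNegDef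

/-- A restricted (or conditionally) negative definite kernel on `X`, tested against complex weights
of total mass zero; the points `x i` may repeat. -/
structure IsRestrictedNegDef {X : Type*} (k : X → X → ℝ) : Prop where
  symm (x y : X) : k x y = k y x
  re_sum_nonpos {n : ℕ} (x : Fin n → X) (ξ : Fin n → ℂ) (hξ : ∑ i, ξ i = 0) :
    (∑ i, ∑ j, (k (x i) (x j) : ℂ) * ξ i * conj (ξ j)).re ≤ 0

variable {ι : Type*} [Fintype ι]

theorem re_sum_ofReal_mul_mul_conj (A : Matrix ι ι ℝ) (ξ : ι → ℂ) :
    (∑ i, ∑ j, (A i j : ℂ) * ξ i * conj (ξ j)).re =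
      (fun i ↦ (ξ i).re) ⬝ᵥ A *ᵥ (fun i ↦ (ξ i).re) +
        (fun i ↦ (ξ i).im) ⬝ᵥ A *ᵥ (fun i ↦ (ξ i).im) := by
  simp only [dotProduct, mulVec, Finset.mul_sum, ← Finset.sum_add_distrib, Complex.re_sum]
  congr! 2
  rw [Complex.mul_re, Complex.re_ofReal_mul, Complex.im_ofReal_mul, Complex.conj_re,
    Complex.conj_im]
  ring

theorem re_sum_ofReal_mul_mul_conj_nonneg {A : Matrix ι ι ℝ} (hA : A.PosSemidef) (ξ : ι → ℂ) :
    0 ≤ (∑ i, ∑ j, (A i j : ℂ) * ξ i * conj (ξ j)).re := by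
  rw [re_sum_ofReal_mul_mul_conj]
  exact add_nonneg (hA.dotProduct_mulVec_nonneg _) (hA.dotProduct_mulVec_nonneg _)

theorem isRestrictedNegDef_const_sub {X : Type*} {K : Matrix X X ℝ} (hK : K.PosSemidef) (c : ℝ) :
    IsRestrictedNegDef fun x y ↦ c - K x y where
  symm x y := by simpa using hK.isHermitian.apply y x
  re_sum_nonpos x ξ hξ := by
    have const_part : ∑ i, ∑ j, (c : ℂ) * ξ i * conj (ξ j) = 0 := by
      simp only [← Finset.mul_sum, ← Finset.sum_mul, hξ, mul_zero, zero_mul]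
    simpa [sub_mul, const_part] using re_sum_ofReal_mul_mul_conj_nonneg (hK.submatrix x) ξ

theorem sphere_geodesic_dist_restricted_negdef_general (E : Type*) [SeminormedAddCommGroup E]
    [InnerProductSpace ℝ E] :
    IsRestrictedNegDef fun x y : Metric.closedBall (0 : E) 1 ↦ Real.arccos (inner ℝ (x : E) y) := by
  have abs_inner_le (x y : Metric.closedBall (0 : E) 1) : |inner ℝ (x : E) y| ≤ 1 :=
    calc |inner ℝ (x : E) y| ≤ ‖(x : E)‖ * ‖(y : E)‖ := abs_real_inner_le_norm _ _
      _ ≤ 1 := mul_le_one₀ (mem_closedBall_zero_iff.1 x.2) (norm_nonneg _)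
        (mem_closedBall_zero_iff.1 y.2)
  exact isRestrictedNegDef_const_sub
    (posSemidef_map_arcsin (posSemidef_of_inner Subtype.val) abs_inner_le) (Real.pi / 2)

end RestrictedNegDef

open Finset in
/-- The geodesic distance `d(x,y) = arccos⟪x,y⟫` on the unit sphere `S³` of Euclidean `ℝ⁴`
is a restricted negative definite kernel. -/
theorem sphere_geodesic_dist_restricted_negdef
    (n : ℕ) (x : Fin n → Metric.sphere (0 : EuclideanSpace ℝ (Fin 4)) 1) (ξ : Fin n → ℂ)
    (hξ : (∑ i, ξ i) = 0) :
    (∑ i, ∑ j,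
      ((Real.arccos (inner (𝕜 := ℝ) (x i : EuclideanSpace ℝ (Fin 4))
        (x j : EuclideanSpace ℝ (Fin 4))) : ℝ) : ℂ)
        * ξ i * (starRingEnd ℂ) (ξ j)).re ≤ 0 :=
  (sphere_geodesic_dist_restricted_negdef_general (EuclideanSpace ℝ (Fin 4))).re_sum_nonpos
    (fun i ↦ ⟨x i, Metric.sphere_subset_closedBall (x i).2⟩) ξ hξ
end
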